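/- arXiv:2101.03728 — 3 statements merged into one kernel-verified Lean document; each statement's English description precedes it below -/
import Mathlib

section
/- Let s≥0 and s₁>1/2. Then for all f∈H^{s+s₁}(𝕋) and g∈H^s(𝕋), the product fg satisfies ‖fg‖_{H^s} ≤ C‖f‖_{H^{s+s₁}}‖g‖_{H^s}, where the constant C depends only on s and s₁. -/
/-!
The `H^s` norm of `g` is the `ℓ²` norm of `⟨k⟩^s ĝ_k`, where `⟨k⟩² = 1 + k²`. By Peetre's inequality
`⟨x + y⟩^s ≤ (√2 ⟨x⟩)^|s| ⟨y⟩^s`, this weight can be distributed over the two factors of the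
convolution `f̂ * ĝ`, and Young's inequality `ℓ¹ * ℓ² ⊆ ℓ²` bounds `‖fg‖_{H^s}` by `‖g‖_{H^s}` times
the weighted Wiener norm `∑ (√2 ⟨k⟩)^|s| |f̂_k|`. Cauchy–Schwarz bounds the latter by
`‖f‖_{H^{|s|+s₁}}`, because `∑ ⟨k⟩^{-2s₁}` converges for `s₁ > 1/2`.
-/

noncomputable section

open Complex MeasureTheory
open scoped BigOperators

/-- A function on the torus `𝕋 = (-π,π)` is represented by its sequence of Fourier
coefficients `f̂ : ℤ → ℂ`. -/
abbrev FSeq := ℤ → ℂ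

/-- Membership in the Sobolev space `H^s(𝕋)`:
`∑_{k∈ℤ} (1+k²)^s |f̂_k|² < ∞`. -/
def InHs (s : ℝ) (a : FSeq) : Prop :=
  Summable fun k : ℤ => (1 + (k : ℝ) ^ 2) ^ s * ‖a k‖ ^ 2

/-- The `H^s(𝕋)` norm: `‖f‖_{H^s}² = 2π ∑_{k∈ℤ} (1+k²)^s |f̂_k|²`. -/
def hnorm (s : ℝ) (a : FSeq) : ℝ :=
  Real.sqrt (2 * Real.pi * ∑' k : ℤ, (1 + (k : ℝ) ^ 2) ^ s * ‖a k‖ ^ 2)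

/-- Convolution of Fourier coefficient sequences: the coefficients of the
pointwise product of two functions. -/
def conv (a b : FSeq) : FSeq := fun k => ∑' j : ℤ, a (k - j) * b j

section CauchySchwarz

variable {ι : Type*} {r p q : ι → ℝ}

lemma summable_of_sq_le_mul (hp : ∀ i, 0 ≤ p i) (hq : ∀ i, 0 ≤ q i)
    (hps : Summable p) (hqs : Summable q) (h : ∀ i, r i ^ 2 ≤ p i * q i) : Summable r := by
  refine (hps.add hqs).of_norm_bounded fun i => abs_le_of_sq_le_sq ?_ (add_nonneg (hp i) (hq i))
  nlinarith [h i, mul_nonneg (hp i) (hq i), sq_nonneg (p i), sq_nonneg (q i)]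

lemma sq_tsum_le_tsum_mul_tsum_of_sq_le_mul (hp : ∀ i, 0 ≤ p i) (hq : ∀ i, 0 ≤ q i)
    (hps : Summable p) (hqs : Summable q) (h : ∀ i, r i ^ 2 ≤ p i * q i) :
    (∑' i, r i) ^ 2 ≤ (∑' i, p i) * ∑' i, q i := by
  have hr : Summable r := summable_of_sq_le_mul hp hq hps hqs h
  refine le_of_tendsto_of_tendsto' (hr.hasSum.pow 2) (Filter.Tendsto.mul hps.hasSum hqs.hasSum)
    fun t => ?_
  exact t.sum_sq_le_sum_mul_sum_of_sq_le_mul (fun i _ => hp i) (fun i _ => hq i) fun i _ => h i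

end CauchySchwarz

section Young

variable {G : Type*} [AddGroup G] {a b : G → ℝ}

lemma hasSum_sub_mul (ha : Summable a) (hb : Summable b) (ha₀ : ∀ x, 0 ≤ a x)
    (hb₀ : ∀ x, 0 ≤ b x) :
    HasSum (fun z : G × G => a (z.1 - z.2) * b z.2) ((∑' x, a x) * ∑' x, b x) := by
  -- `(k, j) ↦ (k - j, j)`
  let shear : G × G ≃ G × G :=
    (Equiv.prodComm G G).trans <| (Equiv.prodShear (.refl G) Equiv.subRight).trans <|
      Equiv.prodComm G G
  exact shear.hasSum_iff.mpr (ha.hasSum.mul hb.hasSum (ha.mul_of_nonneg hb ha₀ hb₀))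

lemma summable_sub_mul_of_summable_sq (ha : Summable a) (ha₀ : ∀ x, 0 ≤ a x)
    (hb : Summable fun x => b x ^ 2) (k : G) : Summable fun j => a (k - j) * b j :=
  summable_of_sq_le_mul (fun _ => ha₀ _) (fun _ => mul_nonneg (ha₀ _) (sq_nonneg _))
    ((Equiv.subLeft k).summable_iff.mpr ha)
    ((hasSum_sub_mul ha hb ha₀ fun _ => sq_nonneg _).summable.prod_factor k)
    fun j => (by ring : (a (k - j) * b j) ^ 2 = a (k - j) * (a (k - j) * b j ^ 2)).le

lemma sq_tsum_sub_mul_le (ha : Summable a) (ha₀ : ∀ x, 0 ≤ a x)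
    (hb : Summable fun x => b x ^ 2) (k : G) :
    (∑' j, a (k - j) * b j) ^ 2 ≤ (∑' x, a x) * ∑' j, a (k - j) * b j ^ 2 := by
  rw [← (Equiv.subLeft k).tsum_eq a]
  exact sq_tsum_le_tsum_mul_tsum_of_sq_le_mul
    (fun _ => ha₀ _) (fun _ => mul_nonneg (ha₀ _) (sq_nonneg _))
    ((Equiv.subLeft k).summable_iff.mpr ha)
    ((hasSum_sub_mul ha hb ha₀ fun _ => sq_nonneg _).summable.prod_factor k)
    fun j => (by ring : (a (k - j) * b j) ^ 2 = a (k - j) * (a (k - j) * b j ^ 2)).le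

lemma summable_sq_tsum_sub_mul (ha : Summable a) (ha₀ : ∀ x, 0 ≤ a x)
    (hb : Summable fun x => b x ^ 2) : Summable fun k => (∑' j, a (k - j) * b j) ^ 2 :=
  ((hasSum_sub_mul ha hb ha₀ fun _ => sq_nonneg _).summable.prod.mul_left _).of_nonneg_of_le
    (fun _ => sq_nonneg _) (sq_tsum_sub_mul_le ha ha₀ hb)

lemma tsum_sq_tsum_sub_mul_le (ha : Summable a) (ha₀ : ∀ x, 0 ≤ a x)
    (hb : Summable fun x => b x ^ 2) :
    ∑' k, (∑' j, a (k - j) * b j) ^ 2 ≤ (∑' x, a x) ^ 2 * ∑' x, b x ^ 2 := by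
  have hab := hasSum_sub_mul ha hb ha₀ fun _ => sq_nonneg _
  calc ∑' k, (∑' j, a (k - j) * b j) ^ 2
      ≤ ∑' k, (∑' x, a x) * ∑' j, a (k - j) * b j ^ 2 :=
        (summable_sq_tsum_sub_mul ha ha₀ hb).tsum_le_tsum (sq_tsum_sub_mul_le ha ha₀ hb)
          (hab.summable.prod.mul_left _)
    _ = (∑' x, a x) * ((∑' x, a x) * ∑' x, b x ^ 2) := by
        rw [tsum_mul_left, ← hab.summable.tsum_prod, hab.tsum_eq]
    _ = (∑' x, a x) ^ 2 * ∑' x, b x ^ 2 := by ring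

end Young

/-- The weight `v` is `u`-moderate, a condition under which convolution maps
`ℓ¹(u) × ℓ²(v)` to `ℓ²(v)`. The constant usually allowed in front is absorbed into `u`. -/
def IsModerate {G : Type*} [Add G] (u v : G → ℝ) : Prop :=
  ∀ x y, v (x + y) ≤ u x * v y

namespace IsModerate

variable {G R : Type*} [AddGroup G] [NonUnitalSeminormedRing R] {u v : G → ℝ} {f g : G → R}

lemma pos (h : IsModerate u v) (hv : ∀ x, 0 < v x) (x : G) : 0 < u x :=
  pos_of_mul_pos_left ((hv (x + 0)).trans_le (h x 0)) (hv 0).le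

lemma mul_norm_sub_mul_le (h : IsModerate u v) (hv : ∀ x, 0 < v x) (k j : G) :
    v k * ‖f (k - j) * g j‖ ≤ u (k - j) * ‖f (k - j)‖ * (v j * ‖g j‖) :=
  calc v k * ‖f (k - j) * g j‖
      ≤ u (k - j) * v j * (‖f (k - j)‖ * ‖g j‖) := by
        have hkj : v k ≤ u (k - j) * v j := by simpa using h (k - j) j
        exact mul_le_mul hkj (norm_mul_le _ _) (norm_nonneg _) ((hv k).le.trans hkj)
    _ = u (k - j) * ‖f (k - j)‖ * (v j * ‖g j‖) := by ring

variable (h : IsModerate u v) (hv : ∀ x, 0 < v x) (hf : Summable fun x => u x * ‖f x‖)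
  (hg : Summable fun x => (v x * ‖g x‖) ^ 2)

include h hv hf hg

lemma summable_norm_sub_mul (k : G) : Summable fun j => ‖f (k - j) * g j‖ := by
  have hu (x : G) : 0 ≤ u x * ‖f x‖ := mul_nonneg (h.pos hv x).le (norm_nonneg _)
  exact (summable_mul_left_iff (hv k).ne').mp <|
    (summable_sub_mul_of_summable_sq hf hu hg k).of_nonneg_of_le
      (fun _ => mul_nonneg (hv k).le (norm_nonneg _)) (h.mul_norm_sub_mul_le hv k)

lemma sq_mul_norm_tsum_sub_mul_le (k : G) :
    (v k * ‖∑' j, f (k - j) * g j‖) ^ 2 ≤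
      (∑' j, u (k - j) * ‖f (k - j)‖ * (v j * ‖g j‖)) ^ 2 := by
  have hu (x : G) : 0 ≤ u x * ‖f x‖ := mul_nonneg (h.pos hv x).le (norm_nonneg _)
  have hfg := h.summable_norm_sub_mul hv hf hg k
  refine pow_le_pow_left₀ (mul_nonneg (hv k).le (norm_nonneg _)) ?_ 2
  calc v k * ‖∑' j, f (k - j) * g j‖
      ≤ v k * ∑' j, ‖f (k - j) * g j‖ :=
        mul_le_mul_of_nonneg_left (norm_tsum_le_tsum_norm hfg) (hv k).le
    _ = ∑' j, v k * ‖f (k - j) * g j‖ := tsum_mul_left.symm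
    _ ≤ ∑' j, u (k - j) * ‖f (k - j)‖ * (v j * ‖g j‖) :=
        (hfg.mul_left _).tsum_le_tsum (h.mul_norm_sub_mul_le hv k)
          (summable_sub_mul_of_summable_sq hf hu hg k)

lemma summable_sq_mul_norm_tsum_sub_mul :
    Summable fun k => (v k * ‖∑' j, f (k - j) * g j‖) ^ 2 :=
  (summable_sq_tsum_sub_mul hf (fun x => mul_nonneg (h.pos hv x).le (norm_nonneg _))
    hg).of_nonneg_of_le (fun _ => sq_nonneg _) (h.sq_mul_norm_tsum_sub_mul_le hv hf hg)

lemma tsum_sq_mul_norm_tsum_sub_mul_le :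
    ∑' k, (v k * ‖∑' j, f (k - j) * g j‖) ^ 2 ≤
      (∑' x, u x * ‖f x‖) ^ 2 * ∑' x, (v x * ‖g x‖) ^ 2 := by
  have hu (x : G) : 0 ≤ u x * ‖f x‖ := mul_nonneg (h.pos hv x).le (norm_nonneg _)
  have hconv := h.summable_sq_mul_norm_tsum_sub_mul hv hf hg
  have hyoung := summable_sq_tsum_sub_mul hf hu hg
  calc ∑' k, (v k * ‖∑' j, f (k - j) * g j‖) ^ 2
      ≤ ∑' k, (∑' j, u (k - j) * ‖f (k - j)‖ * (v j * ‖g j‖)) ^ 2 :=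
        hconv.tsum_le_tsum (h.sq_mul_norm_tsum_sub_mul_le hv hf hg) hyoung
    _ ≤ (∑' x, u x * ‖f x‖) ^ 2 * ∑' x, (v x * ‖g x‖) ^ 2 := tsum_sq_tsum_sub_mul_le hf hu hg

end IsModerate

section Peetre

variable {E : Type*} [SeminormedAddGroup E]

lemma one_add_norm_add_sq_le (x y : E) :
    1 + ‖x + y‖ ^ 2 ≤ 2 * (1 + ‖x‖ ^ 2) * (1 + ‖y‖ ^ 2) := by
  have hxy : ‖x + y‖ ^ 2 ≤ (‖x‖ + ‖y‖) ^ 2 := by gcongr; exact norm_add_le x y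
  nlinarith [sq_nonneg (‖x‖ - ‖y‖), mul_nonneg (sq_nonneg ‖x‖) (sq_nonneg ‖y‖)]

lemma isModerate_one_add_norm_sq_rpow (t : ℝ) :
    IsModerate (fun x : E => (2 * (1 + ‖x‖ ^ 2)) ^ |t|) fun x => (1 + ‖x‖ ^ 2) ^ t := by
  intro x y
  rcases le_total 0 t with ht | ht
  · rw [abs_of_nonneg ht, ← Real.mul_rpow (by positivity) (by positivity)]
    exact Real.rpow_le_rpow (by positivity) (one_add_norm_add_sq_le x y) ht
  · -- For `t ≤ 0`, exchange the roles of `y` and `x + y` by writing `y = -x + (x + y)`.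
    have hy : 1 + ‖y‖ ^ 2 ≤ 2 * (1 + ‖x‖ ^ 2) * (1 + ‖x + y‖ ^ 2) := by
      simpa using one_add_norm_add_sq_le (-x) (x + y)
    calc (1 + ‖x + y‖ ^ 2) ^ t
        = (2 * (1 + ‖x‖ ^ 2)) ^ |t| * (2 * (1 + ‖x‖ ^ 2) * (1 + ‖x + y‖ ^ 2)) ^ t := by
          rw [Real.mul_rpow (x := 2 * (1 + ‖x‖ ^ 2)) (by positivity) (by positivity), ← mul_assoc,
            ← Real.rpow_add (by positivity), abs_of_nonpos ht, neg_add_cancel, Real.rpow_zero,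
            one_mul]
      _ ≤ (2 * (1 + ‖x‖ ^ 2)) ^ |t| * (1 + ‖y‖ ^ 2) ^ t := by
          gcongr ?_ * ?_
          exact Real.rpow_le_rpow_of_nonpos (by positivity) hy ht

end Peetre

lemma summable_one_add_int_sq_rpow_neg {s₁ : ℝ} (hs₁ : 1 / 2 < s₁) :
    Summable fun k : ℤ => (1 + (k : ℝ) ^ 2) ^ (-s₁) := by
  refine (Real.summable_abs_int_rpow (b := 2 * s₁) (by linarith)).of_norm_bounded_eventually ?_
  filter_upwards [Filter.eventually_cofinite_ne (0 : ℤ)] with k hk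
  have hk₀ : (0 : ℝ) < |(k : ℝ)| := by simpa using hk
  calc ‖(1 + (k : ℝ) ^ 2) ^ (-s₁)‖ = (1 + |(k : ℝ)| ^ 2) ^ (-s₁) := by
        rw [Real.norm_of_nonneg (by positivity), sq_abs]
    _ ≤ (|(k : ℝ)| ^ 2) ^ (-s₁) :=
        Real.rpow_le_rpow_of_nonpos (by positivity) (by linarith) (by linarith)
    _ = |(k : ℝ)| ^ (-(2 * s₁)) := by
        rw [← Real.rpow_two, ← Real.rpow_mul hk₀.le, mul_neg]

lemma rpow_half_mul_sq {x : ℝ} (hx : 0 ≤ x) (s y : ℝ) : (x ^ (s / 2) * y) ^ 2 = x ^ s * y ^ 2 := by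
  rw [mul_pow, ← Real.rpow_mul_natCast hx, Nat.cast_ofNat, div_mul_cancel₀ s two_ne_zero]

lemma inHs_iff_summable_sq {s : ℝ} {f : FSeq} :
    InHs s f ↔ Summable fun k : ℤ => ((1 + (k : ℝ) ^ 2) ^ (s / 2) * ‖f k‖) ^ 2 :=
  summable_congr fun _ => (rpow_half_mul_sq (by positivity) _ _).symm

lemma hnorm_nonneg (s : ℝ) (f : FSeq) : 0 ≤ hnorm s f :=
  Real.sqrt_nonneg _

lemma hnorm_sq (s : ℝ) (f : FSeq) :
    hnorm s f ^ 2 = 2 * Real.pi * ∑' k : ℤ, (1 + (k : ℝ) ^ 2) ^ s * ‖f k‖ ^ 2 :=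
  Real.sq_sqrt (mul_nonneg (by positivity) (tsum_nonneg fun _ => by positivity))

lemma hnorm_sq_eq_tsum_sq (s : ℝ) (f : FSeq) :
    hnorm s f ^ 2 = 2 * Real.pi * ∑' k : ℤ, ((1 + (k : ℝ) ^ 2) ^ (s / 2) * ‖f k‖) ^ 2 := by
  rw [hnorm_sq, tsum_congr fun k : ℤ => rpow_half_mul_sq (x := 1 + (k : ℝ) ^ 2) (by positivity) s _]

/-- Membership in the Wiener algebra weighted by `(√2 ⟨k⟩)^σ`, where `⟨k⟩² = 1 + k²`. The factor
`√2` makes this weight moderate `⟨k⟩^s` for `σ = |s|`. -/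
def InWiener (σ : ℝ) (f : FSeq) : Prop :=
  Summable fun k : ℤ => (2 * (1 + (k : ℝ) ^ 2)) ^ (σ / 2) * ‖f k‖

/-- The norm `∑ (√2 ⟨k⟩)^σ |f̂_k|` of the weighted Wiener algebra `InWiener σ`. -/
def wienerNorm (σ : ℝ) (f : FSeq) : ℝ :=
  ∑' k : ℤ, (2 * (1 + (k : ℝ) ^ 2)) ^ (σ / 2) * ‖f k‖

lemma wienerNorm_nonneg (σ : ℝ) (f : FSeq) : 0 ≤ wienerNorm σ f :=
  tsum_nonneg fun _ => by positivity

lemma sq_rpow_mul_norm_eq (σ s₁ : ℝ) (f : FSeq) (k : ℤ) :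
    ((2 * (1 + (k : ℝ) ^ 2)) ^ (σ / 2) * ‖f k‖) ^ 2 =
      (1 + (k : ℝ) ^ 2) ^ (-s₁) * (2 ^ σ * ((1 + (k : ℝ) ^ 2) ^ (σ + s₁) * ‖f k‖ ^ 2)) := by
  have hk : (0 : ℝ) < 1 + (k : ℝ) ^ 2 := by positivity
  rw [rpow_half_mul_sq (by positivity), Real.mul_rpow zero_le_two hk.le, Real.rpow_add hk,
    Real.rpow_neg hk.le]
  field_simp

section SobolevEmbedding

variable {σ s₁ : ℝ} {f : FSeq}

lemma InHs.inWiener (hf : InHs (σ + s₁) f) (hs₁ : 1 / 2 < s₁) : InWiener σ f :=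
  summable_of_sq_le_mul (fun _ => by positivity) (fun _ => by positivity)
    (summable_one_add_int_sq_rpow_neg hs₁) (hf.mul_left (2 ^ σ))
    fun k => (sq_rpow_mul_norm_eq σ s₁ f k).le

lemma InHs.sq_wienerNorm_le (hf : InHs (σ + s₁) f) (hs₁ : 1 / 2 < s₁) :
    wienerNorm σ f ^ 2 ≤ (∑' k : ℤ, (1 + (k : ℝ) ^ 2) ^ (-s₁)) *
      (2 ^ σ * ∑' k : ℤ, (1 + (k : ℝ) ^ 2) ^ (σ + s₁) * ‖f k‖ ^ 2) := by
  rw [← tsum_mul_left (a := (2 : ℝ) ^ σ)]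
  exact sq_tsum_le_tsum_mul_tsum_of_sq_le_mul (fun _ => by positivity) (fun _ => by positivity)
    (summable_one_add_int_sq_rpow_neg hs₁) (hf.mul_left (2 ^ σ))
    fun k => (sq_rpow_mul_norm_eq σ s₁ f k).le

lemma exists_wienerNorm_le_mul_hnorm (σ : ℝ) (hs₁ : 1 / 2 < s₁) :
    ∃ C : ℝ, 0 < C ∧ ∀ f : FSeq, InHs (σ + s₁) f → wienerNorm σ f ≤ C * hnorm (σ + s₁) f := by
  set K : ℝ := ∑' k : ℤ, (1 + (k : ℝ) ^ 2) ^ (-s₁)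
  have hK : 0 < K :=
    (summable_one_add_int_sq_rpow_neg hs₁).tsum_pos (fun _ => by positivity) 0 (by positivity)
  refine ⟨√(2 ^ σ * K / (2 * Real.pi)), by positivity, fun f hf =>
    le_of_sq_le_sq ?_ (mul_nonneg (Real.sqrt_nonneg _) (hnorm_nonneg _ _))⟩
  calc wienerNorm σ f ^ 2
      ≤ K * (2 ^ σ * ∑' k : ℤ, (1 + (k : ℝ) ^ 2) ^ (σ + s₁) * ‖f k‖ ^ 2) := hf.sq_wienerNorm_le hs₁
    _ = (√(2 ^ σ * K / (2 * Real.pi)) * hnorm (σ + s₁) f) ^ 2 := by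
        rw [mul_pow, Real.sq_sqrt (by positivity), hnorm_sq]
        field_simp

end SobolevEmbedding

lemma isModerate_one_add_int_sq_rpow_half (s : ℝ) :
    IsModerate (fun k : ℤ => (2 * (1 + (k : ℝ) ^ 2)) ^ (|s| / 2))
      fun k => (1 + (k : ℝ) ^ 2) ^ (s / 2) := by
  simpa [Int.norm_eq_abs, abs_div] using isModerate_one_add_norm_sq_rpow (E := ℤ) (s / 2)

namespace InWiener

variable {s : ℝ} {f g : FSeq} (hf : InWiener |s| f) (hg : InHs s g)

include hf hg

lemma summable_norm_sub_mul (k : ℤ) : Summable fun j => ‖f (k - j) * g j‖ :=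
  (isModerate_one_add_int_sq_rpow_half s).summable_norm_sub_mul (fun _ => by positivity) hf
    (inHs_iff_summable_sq.mp hg) k

lemma inHs_conv : InHs s (conv f g) :=
  inHs_iff_summable_sq.mpr <|
    (isModerate_one_add_int_sq_rpow_half s).summable_sq_mul_norm_tsum_sub_mul
      (fun _ => by positivity) hf (inHs_iff_summable_sq.mp hg)

lemma hnorm_conv_le : hnorm s (conv f g) ≤ wienerNorm |s| f * hnorm s g := by
  refine le_of_sq_le_sq ?_ (mul_nonneg (wienerNorm_nonneg _ _) (hnorm_nonneg _ _))
  rw [mul_pow, hnorm_sq_eq_tsum_sq, hnorm_sq_eq_tsum_sq, mul_left_comm]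
  exact mul_le_mul_of_nonneg_left
    ((isModerate_one_add_int_sq_rpow_half s).tsum_sq_mul_norm_tsum_sub_mul_le
      (fun _ => by positivity) hf (inHs_iff_summable_sq.mp hg)) (by positivity)

end InWiener

theorem kato_ponce_ii_general (s : ℝ) {s₁ : ℝ} (hs₁ : 1 / 2 < s₁) :
    ∃ C : ℝ, 0 < C ∧ ∀ f g : FSeq, InHs (|s| + s₁) f → InHs s g →
      (∀ k, Summable fun j => ‖f (k - j) * g j‖) ∧ InHs s (conv f g) ∧
        hnorm s (conv f g) ≤ C * hnorm (|s| + s₁) f * hnorm s g := by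
  obtain ⟨C, hC, hle⟩ := exists_wienerNorm_le_mul_hnorm |s| hs₁
  refine ⟨C, hC, fun f g hf hg => ?_⟩
  have hf' : InWiener |s| f := hf.inWiener hs₁
  refine ⟨hf'.summable_norm_sub_mul hg, hf'.inHs_conv hg, ?_⟩
  calc hnorm s (conv f g) ≤ wienerNorm |s| f * hnorm s g := hf'.hnorm_conv_le hg
    _ ≤ C * hnorm (|s| + s₁) f * hnorm s g :=
      mul_le_mul_of_nonneg_right (hle f hf) (hnorm_nonneg s g)

theorem kato_ponce_ii (s s₁ : ℝ) (hs : 0 ≤ s) (hs₁ : 1 / 2 < s₁) :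
    ∃ C : ℝ, 0 < C ∧ ∀ f g : FSeq, InHs (s + s₁) f → InHs s g →
      hnorm s (conv f g) ≤ C * hnorm (s + s₁) f * hnorm s g := by
  obtain ⟨C, hC, h⟩ := kato_ponce_ii_general s hs₁
  rw [abs_of_nonneg hs] at h
  exact ⟨C, hC, fun f g hf hg => (h f g hf hg).2.2⟩

end
end

section
/- Let m≥1 be an integer, N a positive integer, s∈[0,1], and let v∈H¹(𝕋). Suppose g∈L²(𝕋) satisfies |ĝ_k| ≤ 1_{|k|>N} ∑_{k₁+⋯+k_m=k} |v̂_{k₁}|⋯|v̂_{k_m}| for every k∈ℤ (in particular ĝ_k=0 for |k|≤N). Then ‖g‖_{H^s} ≤ C N^{−1+s} ‖v‖_{H¹}^m, where the constant C depends only on m. -/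
/-!
On `|k| > N` one has `(1+k²)^s ≤ N^{2(s-σ)} (1+k²)^σ` for `s ≤ σ`, so the high-frequency bound
reduces to the algebra property of `H^σ(𝕋)`, `σ > 1/2`, iterated over the `m` factors.

The algebra property holds for every weight `w` on an abelian group with
`w (j + k) ≤ K (w j + w k)` and `∑ w⁻¹ < ∞`: Cauchy–Schwarz with the weight `w j * w (k - j)` bounds
`w k |(b * c)(k)|²` by `w k ∑_j (w j * w (k - j))⁻¹` times the convolution of `w b²` and `w c²`, and
quasi-subadditivity bounds the first factor by `2 K ∑ w⁻¹`, uniformly in `k`.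

The sums are taken in `[0,∞]`, so that no summability has to be tracked along the way.
-/

noncomputable section

open Complex MeasureTheory
open scoped BigOperators

/-- The `m`-fold sum `∑_{k₁+⋯+k_m=k} |v̂_{k₁}|⋯|v̂_{k_m}|`. -/
def mSum (m : ℕ) (v : FSeq) (k : ℤ) : ℝ :=
  ∑' t : {t : Fin m → ℤ // ∑ i, t i = k}, ∏ i, ‖v (t.1 i)‖

open scoped ENNReal

section WeightedConvolution

/-- The squared norm of `b` in the weighted space `ℓ²(w)`, with values in `[0,∞]`. -/
def weightedSqNorm {ι : Type*} (w b : ι → ℝ≥0∞) : ℝ≥0∞ := ∑' k, w k * b k ^ 2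

lemma weightedSqNorm_mono_right {ι : Type*} (w : ι → ℝ≥0∞) {b c : ι → ℝ≥0∞} (h : ∀ k, b k ≤ c k) :
    weightedSqNorm w b ≤ weightedSqNorm w c :=
  ENNReal.tsum_le_tsum fun k => by gcongr; exact h k

lemma sq_tsum_mul_le {ι : Type*} (f g : ι → ℝ≥0∞) :
    (∑' i, f i * g i) ^ 2 ≤ (∑' i, f i ^ 2) * ∑' i, g i ^ 2 := by
  let _ : MeasurableSpace ι := ⊤
  have holder := ENNReal.lintegral_mul_le_Lp_mul_Lq (Measure.count : Measure ι)
    Real.HolderConjugate.two_two (f := f) (g := g)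
    measurable_from_top.aemeasurable measurable_from_top.aemeasurable
  simp only [lintegral_count, Pi.mul_apply, ENNReal.rpow_ofNat] at holder
  calc (∑' i, f i * g i) ^ 2
      ≤ ((∑' i, f i ^ 2) ^ (1 / 2 : ℝ) * (∑' i, g i ^ 2) ^ (1 / 2 : ℝ)) ^ 2 := by gcongr
    _ = (∑' i, f i ^ 2) * ∑' i, g i ^ 2 := by
        rw [← ENNReal.mul_rpow_of_nonneg _ _ (by norm_num), ← ENNReal.rpow_mul_natCast]
        norm_num

lemma sq_tsum_le_weightedSqNorm_mul {ι : Type*} {w : ι → ℝ≥0∞} (hw₀ : ∀ i, w i ≠ 0)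
    (hw : ∀ i, w i ≠ ∞) (f : ι → ℝ≥0∞) :
    (∑' i, f i) ^ 2 ≤ weightedSqNorm w f * ∑' i, (w i)⁻¹ := by
  have sq_rpow_half (x : ℝ≥0∞) : (x ^ (1 / 2 : ℝ)) ^ 2 = x := by
    rw [← ENNReal.rpow_mul_natCast]; norm_num
  have split (i : ι) : f i = w i ^ (1 / 2 : ℝ) * f i * (w i)⁻¹ ^ (1 / 2 : ℝ) := by
    rw [mul_right_comm, ← ENNReal.mul_rpow_of_nonneg _ _ (by norm_num),
      ENNReal.mul_inv_cancel (hw₀ i) (hw i), ENNReal.one_rpow, one_mul]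
  calc (∑' i, f i) ^ 2 = (∑' i, w i ^ (1 / 2 : ℝ) * f i * (w i)⁻¹ ^ (1 / 2 : ℝ)) ^ 2 := by
        rw [← tsum_congr split]
    _ ≤ (∑' i, (w i ^ (1 / 2 : ℝ) * f i) ^ 2) * ∑' i, ((w i)⁻¹ ^ (1 / 2 : ℝ)) ^ 2 :=
        sq_tsum_mul_le _ _
    _ = weightedSqNorm w f * ∑' i, (w i)⁻¹ := by
        simp only [mul_pow, sq_rpow_half, weightedSqNorm]

variable {G : Type*} [AddCommGroup G]

/-- The convolution of `b` and `c` for the counting measure, with values in `[0,∞]`. -/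
def discreteConv (b c : G → ℝ≥0∞) (k : G) : ℝ≥0∞ := ∑' j, b j * c (k - j)

/-- The convolution of the family `b`, with values in `[0,∞]`; the sum is indexed as in `mSum`. -/
def multiConv {m : ℕ} (b : Fin m → G → ℝ≥0∞) (k : G) : ℝ≥0∞ :=
  ∑' t : {t : Fin m → G // ∑ i, t i = k}, ∏ i, b i (t.1 i)

/-- Splitting an `(m+1)`-tuple with sum `k` into its head `j` and its tail with sum `k - j`. -/
def tupleSumEquiv (m : ℕ) (k : G) : {t : Fin (m + 1) → G // ∑ i, t i = k} ≃
    Σ j : G, {t : Fin m → G // ∑ i, t i = k - j} where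
  toFun t := ⟨t.1 0, Fin.tail t.1,
    eq_sub_of_add_eq' ((Fin.sum_univ_succ t.1).symm.trans t.2)⟩
  invFun p := ⟨Fin.cons p.1 p.2.1, by simp [Fin.sum_univ_succ, p.2.2]⟩
  left_inv t := Subtype.ext (Fin.cons_self_tail t.1)
  right_inv _ := rfl

lemma multiConv_zero (b : Fin 0 → G → ℝ≥0∞) : multiConv b = Set.indicator {0} 1 := by
  ext k
  rcases eq_or_ne k 0 with rfl | hk
  · simp [multiConv]
  · have : IsEmpty {t : Fin 0 → G // ∑ i, t i = k} := ⟨fun t => hk (by simpa using t.2.symm)⟩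
    simp [multiConv, hk]

lemma multiConv_succ {m : ℕ} (b : Fin (m + 1) → G → ℝ≥0∞) :
    multiConv b = discreteConv (b 0) (multiConv (Fin.tail b)) := by
  ext k
  simp only [multiConv, discreteConv]
  rw [← (tupleSumEquiv m k).symm.tsum_eq, ENNReal.tsum_sigma']
  refine tsum_congr fun j => ?_
  rw [← ENNReal.tsum_mul_left]
  refine tsum_congr fun t => ?_
  rw [Fin.prod_univ_succ]
  rfl

lemma tsum_discreteConv (b c : G → ℝ≥0∞) : ∑' k, discreteConv b c k = (∑' k, b k) * ∑' k, c k := by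
  simp only [discreteConv]
  rw [ENNReal.tsum_comm, ← ENNReal.tsum_mul_right]
  refine tsum_congr fun j => ?_
  rw [ENNReal.tsum_mul_left]
  exact congrArg (b j * ·) ((Equiv.subRight j).tsum_eq c)

variable {w : G → ℝ≥0∞} {K : ℝ≥0∞}

lemma mul_tsum_inv_mul_le (hw₀ : ∀ k, w k ≠ 0) (hw : ∀ k, w k ≠ ∞)
    (hK : ∀ j k, w (j + k) ≤ K * (w j + w k)) (k : G) :
    w k * ∑' j, (w j * w (k - j))⁻¹ ≤ 2 * K * ∑' j, (w j)⁻¹ := by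
  have tsum_reflect : ∑' j, (w (k - j))⁻¹ = ∑' j, (w j)⁻¹ :=
    (Equiv.subLeft k).tsum_eq fun j => (w j)⁻¹
  have pointwise (j : G) : w k * (w j * w (k - j))⁻¹ ≤ K * ((w (k - j))⁻¹ + (w j)⁻¹) :=
    calc w k * (w j * w (k - j))⁻¹
        ≤ K * (w j + w (k - j)) * ((w j)⁻¹ * (w (k - j))⁻¹) := by
          rw [ENNReal.mul_inv (.inl (hw₀ j)) (.inl (hw j))]
          gcongr
          simpa using hK j (k - j)
      _ = K * (w j * (w j)⁻¹ * (w (k - j))⁻¹ + w (k - j) * (w (k - j))⁻¹ * (w j)⁻¹) := by ring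
      _ = K * ((w (k - j))⁻¹ + (w j)⁻¹) := by
          simp only [ENNReal.mul_inv_cancel (hw₀ _) (hw _), one_mul]
  calc w k * ∑' j, (w j * w (k - j))⁻¹
      = ∑' j, w k * (w j * w (k - j))⁻¹ := ENNReal.tsum_mul_left.symm
    _ ≤ ∑' j, K * ((w (k - j))⁻¹ + (w j)⁻¹) := ENNReal.tsum_le_tsum pointwise
    _ = 2 * K * ∑' j, (w j)⁻¹ := by
        rw [ENNReal.tsum_mul_left, ENNReal.tsum_add, tsum_reflect]
        ring

lemma weightedSqNorm_discreteConv_le (hw₀ : ∀ k, w k ≠ 0) (hw : ∀ k, w k ≠ ∞)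
    (hK : ∀ j k, w (j + k) ≤ K * (w j + w k)) (b c : G → ℝ≥0∞) :
    weightedSqNorm w (discreteConv b c) ≤
      2 * K * (∑' k, (w k)⁻¹) * (weightedSqNorm w b * weightedSqNorm w c) := by
  have pointwise (k : G) : w k * discreteConv b c k ^ 2 ≤
      2 * K * (∑' j, (w j)⁻¹) * discreteConv (fun j => w j * b j ^ 2) (fun j => w j * c j ^ 2) k :=
    calc w k * discreteConv b c k ^ 2
        ≤ w k * (weightedSqNorm (fun j => w j * w (k - j)) (fun j => b j * c (k - j)) *
            ∑' j, (w j * w (k - j))⁻¹) := by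
          gcongr
          exact sq_tsum_le_weightedSqNorm_mul (fun j => mul_ne_zero (hw₀ _) (hw₀ _))
            (fun j => ENNReal.mul_ne_top (hw _) (hw _)) _
      _ = w k * (∑' j, (w j * w (k - j))⁻¹) *
            discreteConv (fun j => w j * b j ^ 2) (fun j => w j * c j ^ 2) k := by
          simp only [weightedSqNorm, discreteConv, mul_pow, mul_mul_mul_comm]
          ring
      _ ≤ 2 * K * (∑' j, (w j)⁻¹) *
            discreteConv (fun j => w j * b j ^ 2) (fun j => w j * c j ^ 2) k :=
          mul_le_mul_left (mul_tsum_inv_mul_le hw₀ hw hK k) _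
  calc weightedSqNorm w (discreteConv b c)
      ≤ ∑' k, 2 * K * (∑' j, (w j)⁻¹) *
          discreteConv (fun j => w j * b j ^ 2) (fun j => w j * c j ^ 2) k :=
        ENNReal.tsum_le_tsum pointwise
    _ = 2 * K * (∑' k, (w k)⁻¹) * (weightedSqNorm w b * weightedSqNorm w c) := by
        rw [ENNReal.tsum_mul_left, tsum_discreteConv, weightedSqNorm, weightedSqNorm]

lemma weightedSqNorm_multiConv_le (hw₀ : ∀ k, w k ≠ 0) (hw : ∀ k, w k ≠ ∞)
    (hK : ∀ j k, w (j + k) ≤ K * (w j + w k)) {m : ℕ} (b : Fin m → G → ℝ≥0∞) :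
    weightedSqNorm w (multiConv b) ≤
      w 0 * ∏ i, (2 * K * (∑' k, (w k)⁻¹) * weightedSqNorm w (b i)) := by
  induction m with
  | zero =>
    rw [multiConv_zero, weightedSqNorm, tsum_eq_single 0 fun k hk => by simp [hk]]
    simp
  | succ m ih =>
    rw [multiConv_succ, Fin.prod_univ_succ, mul_left_comm, mul_assoc _ (weightedSqNorm w (b 0))]
    refine (weightedSqNorm_discreteConv_le hw₀ hw hK _ _).trans ?_
    gcongr
    exact ih _

end WeightedConvolution

section SobolevWeight

/-- The weight `(1+k²)^s` of the `H^s(𝕋)` norm, with values in `[0,∞]`. -/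
def sobolevWeight (s : ℝ) (k : ℤ) : ℝ≥0∞ := ENNReal.ofReal ((1 + (k : ℝ) ^ 2) ^ s)

lemma sobolevWeight_ne_zero (s : ℝ) (k : ℤ) : sobolevWeight s k ≠ 0 :=
  (ENNReal.ofReal_pos.2 (by positivity)).ne'

lemma sobolevWeight_ne_top (s : ℝ) (k : ℤ) : sobolevWeight s k ≠ ∞ := ENNReal.ofReal_ne_top

lemma sobolevWeight_zero_right (s : ℝ) : sobolevWeight s 0 = 1 := by simp [sobolevWeight]

lemma one_add_add_sq_rpow_le {s : ℝ} (hs : 0 ≤ s) (x y : ℝ) :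
    (1 + (x + y) ^ 2) ^ s ≤ 4 ^ s * ((1 + x ^ 2) ^ s + (1 + y ^ 2) ^ s) := by
  wlog hxy : y ^ 2 ≤ x ^ 2 generalizing x y
  · rw [add_comm x y, add_comm ((1 + x ^ 2) ^ s)]
    exact this y x (le_of_not_ge hxy)
  calc (1 + (x + y) ^ 2) ^ s ≤ (4 * (1 + x ^ 2)) ^ s := by
        gcongr
        nlinarith [sq_nonneg (x - y)]
    _ = 4 ^ s * (1 + x ^ 2) ^ s := Real.mul_rpow (by norm_num) (by positivity)
    _ ≤ 4 ^ s * ((1 + x ^ 2) ^ s + (1 + y ^ 2) ^ s) := by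
        gcongr
        exact le_add_of_nonneg_right (by positivity)

lemma sobolevWeight_add_le {s : ℝ} (hs : 0 ≤ s) (j k : ℤ) :
    sobolevWeight s (j + k) ≤ ENNReal.ofReal (4 ^ s) * (sobolevWeight s j + sobolevWeight s k) := by
  simp only [sobolevWeight]
  rw [← ENNReal.ofReal_add (by positivity) (by positivity), ← ENNReal.ofReal_mul (by positivity)]
  apply ENNReal.ofReal_le_ofReal
  exact_mod_cast one_add_add_sq_rpow_le hs j k

lemma tsum_inv_sobolevWeight_ne_top {s : ℝ} (hs : 1 / 2 < s) :
    ∑' k, (sobolevWeight s k)⁻¹ ≠ ∞ := by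
  have summable : Summable fun k : ℤ => ((1 + (k : ℝ) ^ 2) ^ s)⁻¹ := by
    refine .of_norm_bounded_eventually (Real.summable_abs_int_rpow (b := 2 * s) (by linarith)) ?_
    filter_upwards [(Set.finite_singleton (0 : ℤ)).compl_mem_cofinite] with k hk
    have cast_ne_zero : (k : ℝ) ≠ 0 := by simpa using hk
    rw [Real.norm_of_nonneg (by positivity), Real.rpow_neg (abs_nonneg _),
      Real.rpow_mul (abs_nonneg _), Real.rpow_two, sq_abs]
    gcongr
    linarith
  have inv_eq (k : ℤ) : (sobolevWeight s k)⁻¹ = ENNReal.ofReal ((1 + (k : ℝ) ^ 2) ^ s)⁻¹ :=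
    (ENNReal.ofReal_inv_of_pos (by positivity)).symm
  simpa only [inv_eq] using summable.tsum_ofReal_ne_top

lemma sobolevWeight_le_of_le_abs {N s σ : ℝ} (hN : 0 < N) (hs : s ≤ σ) {k : ℤ}
    (hk : N ≤ |(k : ℝ)|) :
    sobolevWeight s k ≤ ENNReal.ofReal ((N ^ (s - σ)) ^ 2) * sobolevWeight σ k := by
  have sq_le : N ^ 2 ≤ 1 + (k : ℝ) ^ 2 := by
    rw [← sq_abs (k : ℝ)]
    nlinarith
  simp only [sobolevWeight]
  rw [← ENNReal.ofReal_mul (by positivity)]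
  apply ENNReal.ofReal_le_ofReal
  calc (1 + (k : ℝ) ^ 2) ^ s = (1 + (k : ℝ) ^ 2) ^ (s - σ) * (1 + (k : ℝ) ^ 2) ^ σ := by
        rw [← Real.rpow_add (by positivity), sub_add_cancel]
    _ ≤ (N ^ 2) ^ (s - σ) * (1 + (k : ℝ) ^ 2) ^ σ :=
        mul_le_mul_of_nonneg_right
          (Real.rpow_le_rpow_of_nonpos (by positivity) sq_le (sub_nonpos.2 hs)) (by positivity)
    _ = (N ^ (s - σ)) ^ 2 * (1 + (k : ℝ) ^ 2) ^ σ := by rw [Real.rpow_pow_comm hN.le]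

lemma weightedSqNorm_sobolevWeight_le_of_highFreq {N s σ : ℝ} (hN : 0 < N) (hs : s ≤ σ)
    {b : ℤ → ℝ≥0∞} (hb : ∀ k : ℤ, |(k : ℝ)| < N → b k = 0) :
    weightedSqNorm (sobolevWeight s) b ≤
      ENNReal.ofReal ((N ^ (s - σ)) ^ 2) * weightedSqNorm (sobolevWeight σ) b := by
  simp only [weightedSqNorm]
  rw [← ENNReal.tsum_mul_left]
  refine ENNReal.tsum_le_tsum fun k => ?_
  rcases lt_or_ge |(k : ℝ)| N with hk | hk
  · simp [hb k hk]
  · rw [← mul_assoc]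
    gcongr
    exact sobolevWeight_le_of_le_abs hN hs hk

end SobolevWeight

section Sobolev

/-- `∑ (1+k²)^s |a_k|²` with values in `[0,∞]`: the squared `H^s(𝕋)` norm up to the factor `2π`. -/
def sobolevEnergy (s : ℝ) (a : FSeq) : ℝ≥0∞ := weightedSqNorm (sobolevWeight s) fun k => ‖a k‖ₑ

lemma sobolevEnergy_eq_tsum_ofReal (s : ℝ) (a : FSeq) :
    sobolevEnergy s a = ∑' k : ℤ, ENNReal.ofReal ((1 + (k : ℝ) ^ 2) ^ s * ‖a k‖ ^ 2) := by
  refine tsum_congr fun k => ?_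
  rw [ENNReal.ofReal_mul (by positivity), ENNReal.ofReal_pow (norm_nonneg _), ofReal_norm,
    sobolevWeight]

lemma inHs_iff_sobolevEnergy_ne_top {s : ℝ} {a : FSeq} : InHs s a ↔ sobolevEnergy s a ≠ ∞ := by
  rw [sobolevEnergy_eq_tsum_ofReal]
  refine ⟨Summable.tsum_ofReal_ne_top, fun h => (ENNReal.summable_toReal h).congr fun k => ?_⟩
  exact ENNReal.toReal_ofReal (by positivity)

/-- Both sides are `0` when the series defining the norm diverges. -/
lemma hnorm_eq_sqrt (s : ℝ) (a : FSeq) :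
    hnorm s a = √(2 * Real.pi * (sobolevEnergy s a).toReal) := by
  rw [hnorm, sobolevEnergy_eq_tsum_ofReal, ENNReal.tsum_toReal_eq fun _ => ENNReal.ofReal_ne_top]
  congr 2
  exact tsum_congr fun k => (ENNReal.toReal_ofReal (by positivity)).symm

/-- Both sides are `0` when the series defining `mSum` diverges. -/
lemma mSum_eq_toReal_multiConv (m : ℕ) (v : FSeq) (k : ℤ) :
    mSum m v k = (multiConv (fun (_ : Fin m) j => ‖v j‖ₑ) k).toReal := by
  rw [mSum, multiConv, ENNReal.tsum_toReal_eq fun _ => ENNReal.prod_ne_top fun _ _ => enorm_ne_top]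
  simp only [ENNReal.toReal_prod, toReal_enorm]

lemma hnorm_sq_s10 (s : ℝ) (a : FSeq) :
    hnorm s a ^ 2 = 2 * Real.pi * (sobolevEnergy s a).toReal := by
  rw [hnorm_eq_sqrt, Real.sq_sqrt (by positivity)]

lemma enorm_le_multiConv_of_norm_le_mSum {m : ℕ} {v : FSeq} {k : ℤ} {z : ℂ} (h : ‖z‖ ≤ mSum m v k) :
    ‖z‖ₑ ≤ multiConv (fun (_ : Fin m) j => ‖v j‖ₑ) k := by
  rw [← ofReal_norm]
  exact (ENNReal.ofReal_le_ofReal (h.trans_eq (mSum_eq_toReal_multiConv m v k))).trans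
    ENNReal.ofReal_toReal_le

/-- The constant by which the squared norm of `ℓ²((1+k²)^σ)` is submultiplicative under convolution;
it is `∞` for `σ ≤ 1 / 2`. -/
def sobolevAlgebraConst (σ : ℝ) : ℝ≥0∞ :=
  2 * ENNReal.ofReal (4 ^ σ) * ∑' k, (sobolevWeight σ k)⁻¹

lemma sobolevAlgebraConst_ne_top {σ : ℝ} (hσ : 1 / 2 < σ) : sobolevAlgebraConst σ ≠ ∞ :=
  ENNReal.mul_ne_top (ENNReal.mul_ne_top ENNReal.ofNat_ne_top ENNReal.ofReal_ne_top)
    (tsum_inv_sobolevWeight_ne_top hσ)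

lemma sobolevAlgebraConst_ne_zero (σ : ℝ) : sobolevAlgebraConst σ ≠ 0 := by
  have four_rpow_pos : (0 : ℝ) < 4 ^ σ := by positivity
  have tsum_ne_zero : ∑' k, (sobolevWeight σ k)⁻¹ ≠ 0 := fun h =>
    ENNReal.inv_ne_zero.2 (sobolevWeight_ne_top σ 0) (ENNReal.tsum_eq_zero.1 h 0)
  exact mul_ne_zero (mul_ne_zero two_ne_zero (ENNReal.ofReal_pos.2 four_rpow_pos).ne') tsum_ne_zero

lemma weightedSqNorm_sobolevWeight_multiConv_le {σ : ℝ} (hσ : 0 ≤ σ) {m : ℕ}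
    (b : Fin m → ℤ → ℝ≥0∞) :
    weightedSqNorm (sobolevWeight σ) (multiConv b) ≤
      ∏ i, sobolevAlgebraConst σ * weightedSqNorm (sobolevWeight σ) (b i) := by
  simpa only [sobolevWeight_zero_right, one_mul, sobolevAlgebraConst] using
    weightedSqNorm_multiConv_le (sobolevWeight_ne_zero σ) (sobolevWeight_ne_top σ)
      (sobolevWeight_add_le hσ) b

lemma sobolevEnergy_le_of_highFreq {m : ℕ} {N s σ : ℝ} (hN : 0 < N) (hσ : 0 ≤ σ) (hs : s ≤ σ)
    {v g : FSeq} (hg : ∀ k : ℤ, ‖g k‖ ≤ if N < |(k : ℝ)| then mSum m v k else 0) :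
    sobolevEnergy s g ≤ ENNReal.ofReal ((N ^ (s - σ)) ^ 2) *
      (sobolevAlgebraConst σ * sobolevEnergy σ v) ^ m := by
  have low (k : ℤ) (hk : ¬N < |(k : ℝ)|) : ‖g k‖ₑ = 0 := by simpa [hk] using hg k
  have dominated (k : ℤ) : ‖g k‖ₑ ≤ multiConv (fun (_ : Fin m) j => ‖v j‖ₑ) k := by
    by_cases hk : N < |(k : ℝ)|
    · exact enorm_le_multiConv_of_norm_le_mSum (by simpa [hk] using hg k)
    · simp [low k hk]
  calc sobolevEnergy s g
      ≤ ENNReal.ofReal ((N ^ (s - σ)) ^ 2) * sobolevEnergy σ g :=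
        weightedSqNorm_sobolevWeight_le_of_highFreq hN hs fun k hk => low k hk.not_gt
    _ ≤ ENNReal.ofReal ((N ^ (s - σ)) ^ 2) *
          weightedSqNorm (sobolevWeight σ) (multiConv fun (_ : Fin m) j => ‖v j‖ₑ) := by
        gcongr
        exact weightedSqNorm_mono_right _ dominated
    _ ≤ ENNReal.ofReal ((N ^ (s - σ)) ^ 2) * (sobolevAlgebraConst σ * sobolevEnergy σ v) ^ m := by
        gcongr
        simpa [sobolevEnergy] using
          weightedSqNorm_sobolevWeight_multiConv_le hσ fun (_ : Fin m) j => ‖v j‖ₑ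

lemma hnorm_le_of_sobolevEnergy_le {m : ℕ} {s σ M K : ℝ} {v g : FSeq} (hM : 0 ≤ M) (hK : 0 ≤ K)
    (h : (sobolevEnergy s g).toReal ≤ M ^ 2 * (K * (sobolevEnergy σ v).toReal) ^ m) :
    hnorm s g ≤ √(2 * Real.pi * (K / (2 * Real.pi)) ^ m) * M * hnorm σ v ^ m := by
  have hnorm_nonneg : 0 ≤ hnorm σ v := Real.sqrt_nonneg _
  refine le_of_sq_le_sq ?_ (by positivity)
  calc hnorm s g ^ 2
      ≤ 2 * Real.pi * (M ^ 2 * (K * (sobolevEnergy σ v).toReal) ^ m) := by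
        rw [hnorm_sq_s10]
        gcongr
    _ = 2 * Real.pi * (K / (2 * Real.pi)) ^ m * M ^ 2 * (hnorm σ v ^ 2) ^ m := by
        have rescale : K * (sobolevEnergy σ v).toReal = K / (2 * Real.pi) * hnorm σ v ^ 2 := by
          rw [hnorm_sq_s10]
          field_simp
        rw [rescale, mul_pow]
        ring
    _ = (√(2 * Real.pi * (K / (2 * Real.pi)) ^ m) * M * hnorm σ v ^ m) ^ 2 := by
        rw [mul_pow, mul_pow, Real.sq_sqrt (by positivity), pow_right_comm]

end Sobolev

theorem Tm_highfreq_bound_general (m : ℕ) {σ : ℝ} (hσ : 1 / 2 < σ) :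
    ∃ C : ℝ, 0 < C ∧ ∀ N : ℝ, 0 < N → ∀ s ≤ σ, ∀ v g : FSeq, InHs σ v →
      (∀ k : ℤ, ‖g k‖ ≤ if N < |(k : ℝ)| then mSum m v k else 0) →
      InHs s g ∧ hnorm s g ≤ C * N ^ (s - σ) * hnorm σ v ^ m := by
  have const_pos : 0 < (sobolevAlgebraConst σ).toReal :=
    ENNReal.toReal_pos (sobolevAlgebraConst_ne_zero σ) (sobolevAlgebraConst_ne_top hσ)
  refine ⟨√(2 * Real.pi * ((sobolevAlgebraConst σ).toReal / (2 * Real.pi)) ^ m), by positivity,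
    fun N hN s hs v g hv hg => ?_⟩
  have energy_le := sobolevEnergy_le_of_highFreq hN (by linarith) hs hg
  have bound_ne_top : ENNReal.ofReal ((N ^ (s - σ)) ^ 2) *
      (sobolevAlgebraConst σ * sobolevEnergy σ v) ^ m ≠ ∞ :=
    ENNReal.mul_ne_top ENNReal.ofReal_ne_top <| ENNReal.pow_ne_top <|
      ENNReal.mul_ne_top (sobolevAlgebraConst_ne_top hσ) (inHs_iff_sobolevEnergy_ne_top.1 hv)
  refine ⟨inHs_iff_sobolevEnergy_ne_top.2 (ne_top_of_le_ne_top bound_ne_top energy_le),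
    hnorm_le_of_sobolevEnergy_le (by positivity) const_pos.le ?_⟩
  simpa [ENNReal.toReal_ofReal (sq_nonneg (N ^ (s - σ)))] using
    ENNReal.toReal_mono bound_ne_top energy_le

theorem Tm_highfreq_bound (m : ℕ) (hm : 1 ≤ m) :
    ∃ C : ℝ, 0 < C ∧ ∀ N : ℕ, 0 < N → ∀ s : ℝ, s ∈ Set.Icc (0 : ℝ) 1 →
      ∀ v g : FSeq, InHs 1 v → InHs 0 g →
      (∀ k : ℤ, ‖g k‖ ≤ if (N : ℤ) < |k| then mSum m v k else 0) →
      hnorm s g ≤ C * (N : ℝ) ^ (-1 + s) * hnorm 1 v ^ m := by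
  obtain ⟨C, hC, bound⟩ := Tm_highfreq_bound_general m (σ := 1) (by norm_num)
  refine ⟨C, hC, fun N hN s hs v g hv _ hg => ?_⟩
  rw [neg_add_eq_sub]
  exact (bound N (mod_cast hN) s hs.2 v g hv (mod_cast hg)).2

end
end

section
/- There is an absolute constant C such that for all integers k,k₁,k₂,k₃ with k₁+k₂+k₃=k, k≠0 and |k₂|≥|k₃|, all τ>0, all s∈[0,τ], and all α∈[0,1]: |k₁/k| · |e^{2iskk₁}−1| · |e^{2isk₂k₃}−1| ≤ C τ |k|^{−α} |k₁| |k₂| |k₃|^α. -/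
/-!
With `r = |k₃| / |k|`, the right-hand side is `C τ |k₁| |k₂| r ^ α`, and `min 1 r ≤ r ^ α` for
`α ∈ [0, 1]`, so only the endpoint exponents matter. Each phase factor `|e^{iθ} - 1|` is at most
`2` and at most `|θ|`, and the second bound is needed on only one of the two factors: on the factor
with `k₂ k₃` when `r ≤ 1`, and on the factor with `k k₁` when `r ≥ 1`. The latter costs `|k₁|²`,
but then all frequencies are controlled by `k₂`, namely `|k₁| ≤ |k| + |k₂| + |k₃| ≤ 3 |k₂|`.
-/

noncomputable section

open Complex MeasureTheory
open scoped BigOperators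

lemma min_one_le_rpow {r α : ℝ} (hr : 0 ≤ r) (hα : α ∈ Set.Icc (0 : ℝ) 1) :
    min 1 r ≤ r ^ α := by
  rcases le_total r 1 with hr_le | hr_ge
  · calc min 1 r ≤ r ^ (1 : ℝ) := by simp
      _ ≤ r ^ α := Real.rpow_le_rpow_of_exponent_ge' hr hr_le hα.1 hα.2
  · exact (min_le_left 1 r).trans (Real.one_le_rpow hr_ge hα.1)

lemma norm_exp_I_mul_ofReal_sub_one_le_two (θ : ℝ) : ‖exp (I * θ) - 1‖ ≤ 2 := by
  calc ‖exp (I * θ) - 1‖ ≤ ‖exp (I * θ)‖ + ‖(1 : ℂ)‖ := norm_sub_le _ _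
    _ = 2 := by rw [norm_exp_I_mul_ofReal, norm_one]; norm_num

/-- The multiplier `|k₁/k| · |e^{2iskk₁} - 1| · |e^{2isk₂k₃} - 1|` of a trilinear interaction at
time `s`, for real frequencies; the resonance relation `k₁ + k₂ + k₃ = k` is not built in. -/
def phaseMultiplier (s k k₁ k₂ k₃ : ℝ) : ℝ :=
  |k₁| / |k| * ‖exp (I * (2 * s * k * k₁ : ℝ)) - 1‖ * ‖exp (I * (2 * s * k₂ * k₃ : ℝ)) - 1‖

lemma phaseMultiplier_le_mul_div (s k k₁ k₂ k₃ : ℝ) :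
    phaseMultiplier s k k₁ k₂ k₃ ≤ 4 * |s| * |k₁| * |k₂| * (|k₃| / |k|) := by
  calc phaseMultiplier s k k₁ k₂ k₃
      ≤ |k₁| / |k| * 2 * ‖2 * s * k₂ * k₃‖ := by
        unfold phaseMultiplier
        gcongr
        · exact norm_exp_I_mul_ofReal_sub_one_le_two _
        · exact Real.norm_exp_I_mul_ofReal_sub_one_le
    _ = 4 * |s| * |k₁| * |k₂| * (|k₃| / |k|) := by
        simp only [norm_mul, Real.norm_eq_abs, abs_two]
        ring

lemma phaseMultiplier_le_sq {k : ℝ} (hk : k ≠ 0) (s k₁ k₂ k₃ : ℝ) :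
    phaseMultiplier s k k₁ k₂ k₃ ≤ 4 * |s| * |k₁| ^ 2 := by
  calc phaseMultiplier s k k₁ k₂ k₃
      ≤ |k₁| / |k| * ‖2 * s * k * k₁‖ * 2 := by
        unfold phaseMultiplier
        gcongr
        · exact Real.norm_exp_I_mul_ofReal_sub_one_le
        · exact norm_exp_I_mul_ofReal_sub_one_le_two _
    _ = 4 * |s| * |k₁| ^ 2 := by
        simp only [norm_mul, Real.norm_eq_abs, abs_two]
        field_simp
        ring

lemma phaseMultiplier_le_min {k k₁ k₂ k₃ : ℝ} (hsum : k₁ + k₂ + k₃ = k) (hk : k ≠ 0)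
    (h₃₂ : |k₃| ≤ |k₂|) (s : ℝ) :
    phaseMultiplier s k k₁ k₂ k₃ ≤ 12 * |s| * |k₁| * |k₂| * min 1 (|k₃| / |k|) := by
  have hk_pos : 0 < |k| := abs_pos.mpr hk
  rcases le_total |k₃| |k| with hk₃ | hk₃
  · rw [min_eq_right ((div_le_one hk_pos).mpr hk₃)]
    refine (phaseMultiplier_le_mul_div s k k₁ k₂ k₃).trans ?_
    gcongr
    norm_num
  · have hk₁ : |k₁| ≤ 3 * |k₂| := by
      calc |k₁| = |k - k₂ - k₃| := by rw [← hsum]; ring_nf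
        _ ≤ |k| + |k₂| + |k₃| := (abs_sub _ _).trans (by gcongr; exact abs_sub _ _)
        _ ≤ 3 * |k₂| := by linarith
    rw [min_eq_left ((one_le_div hk_pos).mpr hk₃)]
    calc phaseMultiplier s k k₁ k₂ k₃
        ≤ 4 * |s| * |k₁| ^ 2 := phaseMultiplier_le_sq hk s k₁ k₂ k₃
      _ = 4 * |s| * |k₁| * |k₁| := by ring
      _ ≤ 4 * |s| * |k₁| * (3 * |k₂|) := by gcongr
      _ = 12 * |s| * |k₁| * |k₂| * 1 := by ring

theorem phase_multiplier_bound_general {k k₁ k₂ k₃ : ℝ} (hsum : k₁ + k₂ + k₃ = k) (hk : k ≠ 0)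
    (h₃₂ : |k₃| ≤ |k₂|) {s τ : ℝ} (hs : |s| ≤ τ) {α : ℝ} (hα : α ∈ Set.Icc (0 : ℝ) 1) :
    phaseMultiplier s k k₁ k₂ k₃ ≤ 12 * τ * |k| ^ (-α) * |k₁| * |k₂| * |k₃| ^ α := by
  calc phaseMultiplier s k k₁ k₂ k₃
      ≤ 12 * |s| * |k₁| * |k₂| * min 1 (|k₃| / |k|) := phaseMultiplier_le_min hsum hk h₃₂ s
    _ ≤ 12 * τ * |k₁| * |k₂| * (|k₃| / |k|) ^ α := by
        have hτ : 0 ≤ τ := (abs_nonneg s).trans hs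
        gcongr
        exact min_one_le_rpow (by positivity) hα
    _ = 12 * τ * |k| ^ (-α) * |k₁| * |k₂| * |k₃| ^ α := by
        rw [Real.div_rpow (abs_nonneg _) (abs_nonneg _), Real.rpow_neg (abs_nonneg _)]
        ring

theorem phase_multiplier_bound :
    ∃ C : ℝ, 0 < C ∧ ∀ k k₁ k₂ k₃ : ℤ, k₁ + k₂ + k₃ = k → k ≠ 0 → |k₃| ≤ |k₂| →
      ∀ τ : ℝ, 0 < τ → ∀ s : ℝ, s ∈ Set.Icc 0 τ → ∀ α : ℝ, α ∈ Set.Icc (0 : ℝ) 1 →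
        |(k₁ : ℝ)| / |(k : ℝ)| *
            ‖Complex.exp (2 * Complex.I * (s : ℂ) * (k : ℂ) * (k₁ : ℂ)) - 1‖ *
            ‖Complex.exp (2 * Complex.I * (s : ℂ) * (k₂ : ℂ) * (k₃ : ℂ)) - 1‖ ≤
          C * τ * |(k : ℝ)| ^ (-α) * |(k₁ : ℝ)| * |(k₂ : ℝ)| * |(k₃ : ℝ)| ^ α := by
  refine ⟨12, by norm_num, fun k k₁ k₂ k₃ hsum hk h₃₂ τ _ s hs α hα ↦ ?_⟩
  have hbound := phase_multiplier_bound_general (k := k) (k₁ := k₁) (k₂ := k₂) (k₃ := k₃)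
    (mod_cast hsum) (mod_cast hk) (mod_cast h₃₂) ((abs_of_nonneg hs.1).trans_le hs.2) hα
  simpa [phaseMultiplier, mul_assoc, mul_left_comm] using hbound

end
end
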